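/- For every language Σ ⊆ S*, the call-reduce closure of the null closure is contained in the null closure of the call-reduce closure: C(N(Σ)) ⊆ N(C(Σ)). -/

import Mathlib

/-!
A derivation from `σ₁ ++ σ₂` by non-shift transitions can be imitated from `σ₁ ++ s :: σ₂` when `s`
is nullable (`epsReach_insert`): as long as the part above `σ₂` is nonempty, only that part is
rewritten, so the same transitions apply with `s` lying below it; if that part is ever used up,
`s` is on top of the stack and can be erased by its own non-shift derivation.

Hence the set of configurations all of whose non-shift derivatives lie in `N(C(Σ))` is
null-closed. It contains `Σ`, so it contains `N(Σ)`, which is the claim.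
-/

/-- Transitions of a recursive transition network over states `S`,
terminal alphabet `A`, and production labels `P`. -/
inductive Tr (S A P : Type) : Type where
  | shift (s : S) (a : A) (t : S)
  | call (s u t : S)
  | reduce (s : S) (p : P)

variable {S A P : Type}

/-- A transition is a shift transition. -/
def Tr.isShift : Tr S A P → Prop
  | .shift _ _ _ => True
  | _ => False

/-- One-step reachability induced by a single transition on configurations (words over `S`). -/
inductive Step : Tr S A P → List S → List S → Prop where
  | shift (s : S) (a : A) (t : S) (σ : List S) :
      Step (Tr.shift s a t) (s :: σ) (t :: σ)
  | call (s u t : S) (σ : List S) :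
      Step (Tr.call s u t) (s :: σ) (u :: t :: σ)
  | reduce (s : S) (p : P) (σ : List S) :
      Step (Tr.reduce s p) (s :: σ) σ

/-- Reachability along a sequence of transitions, all belonging to `D`. -/
inductive Reach (D : Set (Tr S A P)) : List (Tr S A P) → List S → List S → Prop where
  | nil (σ : List S) : Reach D [] σ σ
  | cons {d : Tr S A P} {δ : List (Tr S A P)} {σ σ' σ'' : List S} :
      d ∈ D → Step d σ σ' → Reach D δ σ' σ'' → Reach D (d :: δ) σ σ''

/-- `η` consists of non-shift transitions (membership in `D` is enforced by `Reach`). -/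
def EpsSeq (η : List (Tr S A P)) : Prop := ∀ d ∈ η, ¬ d.isShift

/-- A state is nullable if it reaches the empty configuration by non-shift transitions. -/
def Nullable (D : Set (Tr S A P)) (s : S) : Prop :=
  ∃ η : List (Tr S A P), EpsSeq η ∧ Reach D η [s] []

/-- Call-reduce closure of a language of configurations. -/
def CRC (D : Set (Tr S A P)) (L : Set (List S)) : Set (List S) :=
  {σ' | ∃ (η : List (Tr S A P)) (σ : List S), EpsSeq η ∧ σ ∈ L ∧ Reach D η σ σ'}

/-- Shift of a language of configurations by the terminal `a`. -/
def ShiftL (D : Set (Tr S A P)) (a : A) (L : Set (List S)) : Set (List S) :=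
  {σ' | ∃ (s t : S) (σ : List S), Tr.shift s a t ∈ D ∧ σ ∈ L ∧ Step (Tr.shift s a t : Tr S A P) σ σ'}

/-- A language is null-closed if nullable states may be skipped. -/
def NullClosed (D : Set (Tr S A P)) (L : Set (List S)) : Prop :=
  ∀ (σ₁ : List S) (s : S) (σ₂ : List S),
    Nullable D s → σ₁ ++ s :: σ₂ ∈ L → σ₁ ++ σ₂ ∈ L

/-- Null closure: the smallest null-closed language containing `L`. -/
def NClo (D : Set (Tr S A P)) (L : Set (List S)) : Set (List S) :=
  ⋂₀ {T | L ⊆ T ∧ NullClosed D T}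

/-- Reachability along some sequence of non-shift transitions of `D`. -/
def EpsReach (D : Set (Tr S A P)) (σ τ : List S) : Prop :=
  ∃ η : List (Tr S A P), EpsSeq η ∧ Reach D η σ τ

theorem EpsReach.refl (D : Set (Tr S A P)) (σ : List S) : EpsReach D σ σ :=
  ⟨[], by simp [EpsSeq], .nil σ⟩

theorem EpsReach.head {D : Set (Tr S A P)} {d : Tr S A P} {σ τ ρ : List S} (hd : d ∈ D)
    (he : ¬ d.isShift) (hs : Step d σ τ) (h : EpsReach D τ ρ) : EpsReach D σ ρ := by
  obtain ⟨η, hη, hr⟩ := h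
  exact ⟨d :: η, by simpa [EpsSeq] using ⟨he, hη⟩, .cons hd hs hr⟩

theorem EpsReach.trans {D : Set (Tr S A P)} {σ τ ρ : List S} (h₁ : EpsReach D σ τ)
    (h₂ : EpsReach D τ ρ) : EpsReach D σ ρ := by
  obtain ⟨η, hη, hr⟩ := h₁
  induction hr with
  | nil => exact h₂
  | cons hd hs _ ih =>
    simp only [EpsSeq, List.forall_mem_cons] at hη
    exact .head hd hη.1 hs (ih h₂ hη.2)

theorem Step.append {d : Tr S A P} {σ τ : List S} (h : Step d σ τ) (ρ : List S) :
    Step d (σ ++ ρ) (τ ++ ρ) := by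
  cases h <;> constructor

theorem EpsReach.append {D : Set (Tr S A P)} {σ τ : List S} (h : EpsReach D σ τ) (ρ : List S) :
    EpsReach D (σ ++ ρ) (τ ++ ρ) := by
  obtain ⟨η, hη, hr⟩ := h
  refine ⟨η, hη, ?_⟩
  clear hη
  induction hr with
  | nil => exact .nil _
  | cons hd hs _ ih => exact .cons hd (hs.append ρ) ih

/-- A step rewrites only the top state, so it does not see what lies below it. -/
theorem Step.split_cons {d : Tr S A P} {x : S} {σ ρ : List S} (h : Step d (x :: σ) ρ) :
    ∃ w, ρ = w ++ σ ∧ Step d [x] w := by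
  cases h with
  | shift _ a t => exact ⟨[t], rfl, .shift _ _ _ _⟩
  | call _ u t => exact ⟨[u, t], rfl, .call _ _ _ _⟩
  | reduce _ p => exact ⟨[], rfl, .reduce _ _ _⟩

/-- The first alternative is a derivation that never touches `σ₂`; in the second the part above
`σ₂` was used up, and `s` has been erased on the way. -/
theorem epsReach_insert {D : Set (Tr S A P)} {s : S} (hn : Nullable D s) {σ₁ σ₂ ρ : List S}
    (h : EpsReach D (σ₁ ++ σ₂) ρ) :
    (∃ σ₁', ρ = σ₁' ++ σ₂ ∧ EpsReach D (σ₁ ++ s :: σ₂) (σ₁' ++ s :: σ₂)) ∨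
      EpsReach D (σ₁ ++ s :: σ₂) ρ := by
  obtain ⟨η, hη, hr⟩ := h
  generalize hσ : σ₁ ++ σ₂ = σ at hr
  induction hr generalizing σ₁ with
  | nil => exact .inl ⟨σ₁, hσ.symm, .refl D _⟩
  | @cons d δ σ τ ρ hd hs hr ih =>
    subst hσ
    have hη' := hη
    simp only [EpsSeq, List.forall_mem_cons] at hη
    cases σ₁ with
    | nil =>
      have hpop : EpsReach D (s :: σ₂) σ₂ := EpsReach.append (σ := [s]) (τ := []) hn σ₂
      exact .inr (hpop.trans ⟨d :: δ, hη', .cons hd hs hr⟩)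
    | cons x σ₁ =>
      obtain ⟨w, rfl, hw⟩ := hs.split_cons
      have hw' : Step d (x :: σ₁ ++ s :: σ₂) ((w ++ σ₁) ++ s :: σ₂) := by
        simpa using hw.append (σ₁ ++ s :: σ₂)
      rcases ih (σ₁ := w ++ σ₁) hη.2 (by simp) with ⟨σ₁', e, h⟩ | h
      · exact .inl ⟨σ₁', e, .head hd hη.1 hw' h⟩
      · exact .inr (.head hd hη.1 hw' h)

theorem nullClosed_NClo (D : Set (Tr S A P)) (L : Set (List S)) : NullClosed D (NClo D L) :=
  fun σ₁ s σ₂ hn h T hT => hT.2 σ₁ s σ₂ hn (h T hT)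

/-- For every language `Σ ⊆ S*`, `C(N(Σ)) ⊆ N(C(Σ))`. -/
theorem closure_nullClosure_subset
    (S A P : Type) (D : Set (Tr S A P)) (L : Set (List S)) :
    CRC D (NClo D L) ⊆ NClo D (CRC D L) := by
  rintro ρ ⟨η, σ, hη, hσ, hr⟩
  refine hσ {σ | ∀ ρ, EpsReach D σ ρ → ρ ∈ NClo D (CRC D L)} ⟨?_, ?_⟩ ρ ⟨η, hη, hr⟩
  · rintro σ hσ ρ ⟨η, hη, hr⟩ T hT
    exact hT.1 ⟨η, σ, hη, hσ, hr⟩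
  · intro σ₁ s σ₂ hn h ρ hρ
    rcases epsReach_insert hn hρ with ⟨σ₁', rfl, h'⟩ | h'
    · exact nullClosed_NClo D _ σ₁' s σ₂ hn (h _ h')
    · exact h _ h'
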